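/- Let n ≥ 2 and m = n − 2, and let f : ℂ × ℂ → ℂ be analytic on an open neighborhood of (0,0). For (x, a) = (x, a_0, …, a_m) near 0 in ℂ × ℂ^{m+1} define g(x, a) := f(x, Σ_{i=0}^m a_i x^i), and for each i ≥ 0 define k_i(a) := −(1/i!) · (∂^i g/∂x^i)(0, a), a holomorphic function of a on a neighborhood of 0 in ℂ^{m+1}. Then there exist an open neighborhood U of 0 in ℂ^{m+1} and a holomorphic function W : U → ℂ such that ∂W/∂a_i = k_{n−1−i} on U for all 0 ≤ i ≤ m. -/

import Mathlib

open Set Filter Topology Metric MeasureTheory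

/-- Primitive of `f` in the second variable, vanishing at `y = 0`. -/
noncomputable def spPrim (f : ℂ × ℂ → ℂ) (x y : ℂ) : ℂ :=
  ∫ t in (0 : ℝ)..1, y * f (x, (t : ℂ) * y)

lemma spPrim_hasDerivAt {f : ℂ × ℂ → ℂ} {R : ℝ}
    (hd : ∀ p : ℂ × ℂ, ‖p‖ ≤ R → DifferentiableAt ℂ f p) {x y : ℂ}
    (hx : ‖x‖ ≤ R) (hy : ‖y‖ < R) :
    HasDerivAt (spPrim f x) (f (x, y)) y := by
  have hfx : ∀ w : ℂ, ‖w‖ ≤ R → DifferentiableAt ℂ (fun w => f (x, w)) w := by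
    intro w hw
    have h1 : DifferentiableAt ℂ f (x, w) := hd _ (by simp [Prod.norm_def, hx, hw])
    exact h1.comp w (by fun_prop : DifferentiableAt ℂ (fun w : ℂ => (x, w)) w)
  have hdo : DifferentiableOn ℂ (fun w => f (x, w)) (ball 0 R) := fun w hw =>
    (hfx w (by simpa using (mem_ball_zero_iff.1 hw).le)).differentiableWithinAt
  obtain ⟨P, hP⟩ := hdo.isExactOn_ball
  have key : ∀ w ∈ ball (0 : ℂ) R, spPrim f x w = P w - P 0 := by
    intro w hw
    have hmem : ∀ t ∈ uIcc (0 : ℝ) 1, (t : ℂ) * w ∈ ball (0 : ℂ) R := by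
      intro t ht
      rw [uIcc_of_le zero_le_one] at ht
      rw [mem_ball_zero_iff] at hw ⊢
      rw [norm_mul, Complex.norm_real, Real.norm_of_nonneg ht.1]
      exact lt_of_le_of_lt (mul_le_of_le_one_left (norm_nonneg _) ht.2) hw
    have hder : ∀ t ∈ uIcc (0 : ℝ) 1,
        HasDerivAt (fun t : ℝ => P ((t : ℂ) * w)) (w * f (x, (t : ℂ) * w)) t := by
      intro t ht
      have h1 : HasDerivAt (fun t : ℝ => (t : ℂ) * w) w t := by
        simpa using (Complex.ofRealCLM.hasDerivAt (x := t)).mul_const w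
      have h2 := (hP _ (hmem t ht)).scomp t h1
      simpa [Function.comp_def] using h2
    have hcont : ContinuousOn (fun t : ℝ => w * f (x, (t : ℂ) * w)) (uIcc (0 : ℝ) 1) := by
      refine continuousOn_const.mul ?_
      exact hdo.continuousOn.comp (f := fun t : ℝ => (t : ℂ) * w) (by fun_prop) hmem
    have := intervalIntegral.integral_eq_sub_of_hasDerivAt hder hcont.intervalIntegrable
    simpa [spPrim] using this
  have hyb : y ∈ ball (0 : ℂ) R := by simpa using hy
  refine ((hP y hyb).sub_const (P 0)).congr_of_eventuallyEq ?_
  filter_upwards [isOpen_ball.mem_nhds hyb] with w hw using key w hw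

lemma spPrim_continuous {f : ℂ × ℂ → ℂ} {R : ℝ}
    (hd : ∀ p : ℂ × ℂ, ‖p‖ ≤ R → DifferentiableAt ℂ f p) {p q : ℝ → ℂ}
    (hp : Continuous p) (hq : Continuous q) (hpR : ∀ θ, ‖p θ‖ ≤ R) (hqR : ∀ θ, ‖q θ‖ ≤ R) :
    Continuous fun θ => spPrim f (p θ) (q θ) := by
  have heq : (fun θ => spPrim f (p θ) (q θ)) = fun θ =>
      ∫ t in (0 : ℝ)..1, q θ * f (p θ, ((max 0 (min 1 t) : ℝ) : ℂ) * q θ) := by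
    funext θ
    refine intervalIntegral.integral_congr fun t ht => ?_
    rw [uIcc_of_le zero_le_one] at ht
    simp only [min_eq_right ht.2, max_eq_right ht.1]
  rw [heq]
  apply intervalIntegral.continuous_parametric_intervalIntegral_of_continuous'
  have hc : Continuous fun u : ℝ × ℝ =>
      f (p u.1, ((max 0 (min 1 u.2) : ℝ) : ℂ) * q u.1) := by
    rw [continuous_iff_continuousAt]
    intro u
    have h1 : ContinuousAt f (p u.1, ((max 0 (min 1 u.2) : ℝ) : ℂ) * q u.1) := by
      apply (hd _ _).continuousAt
      rw [Prod.norm_def]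
      refine max_le (hpR _) ?_
      simp only
      rw [norm_mul, Complex.norm_real, Real.norm_of_nonneg (le_max_left _ _)]
      exact (mul_le_of_le_one_left (norm_nonneg _)
        (max_le zero_le_one (min_le_left _ _))).trans (hqR _)
    exact ContinuousAt.comp (f := fun u : ℝ × ℝ =>
      (p u.1, ((max 0 (min 1 u.2) : ℝ) : ℂ) * q u.1)) h1
      (Continuous.continuousAt (by fun_prop))
  exact (hq.comp continuous_fst).mul hc

/-- The linear functional `a ↦ ∑ a_l x^l`. -/
noncomputable def spL (m : ℕ) (x : ℂ) : (Fin (m + 1) → ℂ) →L[ℂ] ℂ :=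
  ∑ l : Fin (m + 1), x ^ (l : ℕ) • ContinuousLinearMap.proj (R := ℂ) (φ := fun _ => ℂ) l

lemma spL_apply (m : ℕ) (x : ℂ) (a : Fin (m + 1) → ℂ) :
    spL m x a = ∑ l : Fin (m + 1), a l * x ^ (l : ℕ) := by
  simp [spL, mul_comm]

lemma spL_single (m : ℕ) (x : ℂ) (i : Fin (m + 1)) :
    spL m x (Pi.single i 1) = x ^ (i : ℕ) := by
  simp [spL_apply, Pi.single_apply]

lemma spL_continuous (m : ℕ) : Continuous (spL m) := by
  unfold spL; fun_prop

lemma spL_norm_le (m : ℕ) {x : ℂ} (hx : ‖x‖ ≤ 1) : ‖spL m x‖ ≤ m + 1 := by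
  refine ContinuousLinearMap.opNorm_le_bound _ (by positivity) fun a => ?_
  rw [spL_apply]
  calc _ ≤ ∑ l : Fin (m + 1), ‖a l * x ^ (l : ℕ)‖ := norm_sum_le _ _
    _ ≤ ∑ l : Fin (m + 1), ‖a‖ := by
        refine Finset.sum_le_sum fun l _ => ?_
        rw [norm_mul, norm_pow]
        exact (mul_le_of_le_one_right (norm_nonneg _)
          (pow_le_one₀ (norm_nonneg _) hx)).trans (norm_le_pi_norm a l)
    _ = _ := by simp

lemma spW_hasFDerivAt {f : ℂ × ℂ → ℂ} {R r : ℝ} (n m : ℕ)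
    (hd : ∀ p : ℂ × ℂ, ‖p‖ ≤ R → DifferentiableAt ℂ f p) (hr : 0 < r) (hrR : r ≤ R)
    (hr1 : r ≤ 1) {a : Fin (m + 1) → ℂ} (ha : a ∈ ball (0 : Fin (m + 1) → ℂ) (R / (m + 1))) :
    HasFDerivAt (fun a => ∮ z in C(0, r), 1 / z ^ n * spPrim f z (spL m z a))
      (∫ θ in (0 : ℝ)..2 * Real.pi, (deriv (circleMap 0 r) θ * (1 / circleMap 0 r θ ^ n) *
        f (circleMap 0 r θ, spL m (circleMap 0 r θ) a)) • spL m (circleMap 0 r θ)) a := by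
  have hzr : ∀ θ, ‖circleMap 0 r θ‖ = r := fun θ => by simp [abs_of_pos hr]
  have hz0 : ∀ θ, circleMap 0 r θ ≠ 0 := fun θ => circleMap_ne_center hr.ne'
  have hzR : ∀ θ, ‖circleMap 0 r θ‖ ≤ R := fun θ => (hzr θ).le.trans hrR
  have hS : ∀ b ∈ ball (0 : Fin (m + 1) → ℂ) (R / (m + 1)), ∀ θ,
      ‖spL m (circleMap 0 r θ) b‖ < R := by
    intro b hb θ
    rw [mem_ball_zero_iff, lt_div_iff₀ (by positivity)] at hb
    refine lt_of_le_of_lt ((spL m _).le_opNorm b) (lt_of_le_of_lt ?_ hb)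
    rw [mul_comm]
    exact mul_le_mul_of_nonneg_left (spL_norm_le m ((hzr θ).le.trans hr1)) (norm_nonneg _)
  have hSc : ∀ b, Continuous fun θ => spL m (circleMap 0 r θ) b := fun b => by
    simp only [spL_apply]; fun_prop
  have hc1 : Continuous fun θ : ℝ => deriv (circleMap 0 r) θ * (1 / circleMap 0 r θ ^ n) := by
    simp only [deriv_circleMap]
    refine Continuous.mul (by fun_prop) ?_
    exact continuous_const.div (by fun_prop) fun θ => pow_ne_zero _ (hz0 θ)
  have hfc : Continuous fun θ => f (circleMap 0 r θ, spL m (circleMap 0 r θ) a) := by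
    rw [continuous_iff_continuousAt]
    intro θ
    have h1 : ContinuousAt f (circleMap 0 r θ, spL m (circleMap 0 r θ) a) :=
      (hd _ (by rw [Prod.norm_def]; exact max_le (hzR θ) (hS a ha θ).le)).continuousAt
    exact ContinuousAt.comp (f := fun θ => (circleMap 0 r θ, spL m (circleMap 0 r θ) a)) h1
      (((continuous_circleMap 0 r).prodMk (hSc a)).continuousAt)
  obtain ⟨M, hM⟩ := (isCompact_closedBall (0 : ℂ × ℂ) R).exists_bound_of_continuousOn (f := f)
    (fun p hp => (hd p (by simpa using hp)).continuousAt.continuousWithinAt)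
  have hPc : ∀ b ∈ ball (0 : Fin (m + 1) → ℂ) (R / (m + 1)), Continuous fun θ =>
      deriv (circleMap 0 r) θ • (1 / circleMap 0 r θ ^ n *
        spPrim f (circleMap 0 r θ) (spL m (circleMap 0 r θ) b)) := by
    intro b hb
    simp only [smul_eq_mul, ← mul_assoc]
    exact hc1.mul (spPrim_continuous hd (continuous_circleMap 0 r) (hSc b) hzR
      fun θ => (hS b hb θ).le)
  simp only [circleIntegral]
  refine intervalIntegral.hasFDerivAt_integral_of_dominated_of_fderiv_le
    (F' := fun b θ => (deriv (circleMap 0 r) θ * (1 / circleMap 0 r θ ^ n) *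
        f (circleMap 0 r θ, spL m (circleMap 0 r θ) b)) • spL m (circleMap 0 r θ))
    (bound := fun θ => ‖deriv (circleMap 0 r) θ * (1 / circleMap 0 r θ ^ n)‖ * M * (m + 1))
    (isOpen_ball.mem_nhds ha) ?_ ?_ ?_ ?_ ?_ ?_
  · filter_upwards [isOpen_ball.mem_nhds ha] with b hb using (hPc b hb).aestronglyMeasurable
  · exact (hPc a ha).intervalIntegrable _ _
  · exact ((hc1.mul hfc).smul ((spL_continuous m).comp
      (continuous_circleMap 0 r))).aestronglyMeasurable
  · refine Eventually.of_forall fun θ _ b hb => ?_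
    rw [norm_smul, norm_mul]
    have h1 := hM (circleMap 0 r θ, spL m (circleMap 0 r θ) b) (by
      rw [mem_closedBall_zero_iff, Prod.norm_def]; exact max_le (hzR θ) (hS b hb θ).le)
    have h2 := spL_norm_le m ((hzr θ).le.trans hr1)
    have h3 := (norm_nonneg _).trans h1
    gcongr
  · exact ((hc1.norm.mul continuous_const).mul continuous_const).intervalIntegrable _ _
  · refine Eventually.of_forall fun θ _ b hb => ?_
    have h1 := (spPrim_hasDerivAt hd (hzR θ) (hS b hb θ)).comp_hasFDerivAt b
      (spL m (circleMap 0 r θ)).hasFDerivAt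
    have h2 := h1.const_mul (deriv (circleMap 0 r) θ * (1 / circleMap 0 r θ ^ n))
    simpa only [smul_smul, smul_eq_mul, mul_assoc, Function.comp_def] using h2


/-- Let `n ≥ 2`, `m = n − 2`, and let `f : ℂ × ℂ → ℂ` be analytic near
`(0,0)`.  For `(x, a)` near `0` in `ℂ × ℂ^{m+1}` set `g(x, a) := f(x, ∑_{l=0}^m a_l x^l)`, and
for `i ≥ 0` set `k_i(a) := −(1/i!) · (∂^i g/∂x^i)(0, a)`.  Then there are an open
neighborhood `U` of `0` in `ℂ^{m+1}` and a holomorphic `W : U → ℂ` such that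
`∂W/∂a_i = k_{n−1−i}` on `U` for all `0 ≤ i ≤ m`. -/
theorem exists_superpotential_analytic (n m : ℕ) (hn : 2 ≤ n) (hm : m = n - 2)
    (f : ℂ × ℂ → ℂ) (hf : AnalyticAt ℂ f (0, 0))
    (g : ℂ → (Fin (m + 1) → ℂ) → ℂ)
    (hg : ∀ x a, g x a = f (x, ∑ l : Fin (m + 1), a l * x ^ (l : ℕ)))
    (k : ℕ → (Fin (m + 1) → ℂ) → ℂ)
    (hk : ∀ i a, k i a = -((1 / (i.factorial : ℂ)) * iteratedDeriv i (fun x => g x a) 0)) :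
    ∃ U : Set (Fin (m + 1) → ℂ), IsOpen U ∧ (0 : Fin (m + 1) → ℂ) ∈ U ∧
      ∃ W : (Fin (m + 1) → ℂ) → ℂ, DifferentiableOn ℂ W U ∧
        ∀ i : Fin (m + 1), ∀ a ∈ U,
          fderiv ℂ W a (Pi.single i 1) = k (n - 1 - (i : ℕ)) a := by
  obtain ⟨R, hR, hRb⟩ := Metric.eventually_nhds_iff.1 hf.eventually_analyticAt
  have hd : ∀ p : ℂ × ℂ, ‖p‖ ≤ R / 2 → DifferentiableAt ℂ f p := fun p hp =>
    (hRb (y := p) (by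
      have : dist p (0, 0) = ‖p‖ := dist_zero_right p
      rw [this]; linarith)).differentiableAt
  set r : ℝ := min 1 (R / 2) with hrdef
  have hr : 0 < r := lt_min one_pos (by linarith)
  have hr1 : r ≤ 1 := min_le_left _ _
  have hrR : r ≤ R / 2 := min_le_right _ _
  have hW := fun a ha => spW_hasFDerivAt (a := a) n m hd hr hrR hr1 ha
  refine ⟨ball 0 (R / 2 / (m + 1)), isOpen_ball, mem_ball_self (by positivity),
    fun a => -(1 / (2 * Real.pi * Complex.I)) *
      ∮ z in C(0, r), 1 / z ^ n * spPrim f z (spL m z a), ?_, ?_⟩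
  · intro a ha
    exact ((hW a ha).const_mul _).differentiableAt.differentiableWithinAt
  · intro i a ha
    rw [((hW a ha).const_mul _).fderiv, smul_apply]
    have hS : ∀ z : ℂ, ‖z‖ ≤ r → ‖spL m z a‖ < R / 2 := by
      intro z hz
      rw [mem_ball_zero_iff, lt_div_iff₀ (by positivity)] at ha
      refine lt_of_le_of_lt ((spL m _).le_opNorm a) (lt_of_le_of_lt ?_ ha)
      rw [mul_comm]
      exact mul_le_mul_of_nonneg_left (spL_norm_le m (hz.trans hr1)) (norm_nonneg _)
    have hgd : DifferentiableOn ℂ (fun x => g x a) (closedBall 0 r) := by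
      intro z hz
      rw [mem_closedBall_zero_iff] at hz
      have h1 : DifferentiableAt ℂ f (z, spL m z a) :=
        hd _ (by rw [Prod.norm_def]; exact max_le (hz.trans hrR) (hS z hz).le)
      simp only [hg]
      rw [spL_apply] at h1
      exact (DifferentiableAt.comp (f := fun x : ℂ => (x, ∑ l : Fin (m + 1), a l * x ^ (l : ℕ)))
        z h1 (by fun_prop)).differentiableWithinAt
    have hC := hgd.circleIntegral_one_div_sub_center_pow_smul hr (n - 1 - (i : ℕ))
    have hz0 : ∀ θ, circleMap 0 r θ ≠ 0 := fun θ => circleMap_ne_center hr.ne'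
    have hii := i.isLt
    have hni : n = (n - 1 - (i : ℕ) + 1) + i := by omega
    have hsc : Continuous fun θ => spL m (circleMap 0 r θ) a := by
      simp only [spL_apply]; fun_prop
    have hint : IntervalIntegrable (fun θ => (deriv (circleMap 0 r) θ *
        (1 / circleMap 0 r θ ^ n) * f (circleMap 0 r θ, spL m (circleMap 0 r θ) a)) •
        spL m (circleMap 0 r θ)) volume 0 (2 * Real.pi) := by
      apply Continuous.intervalIntegrable
      suffices hs : Continuous fun θ => deriv (circleMap 0 r) θ *
          (1 / circleMap 0 r θ ^ n) * f (circleMap 0 r θ, spL m (circleMap 0 r θ) a) from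
        hs.smul ((spL_continuous m).comp (continuous_circleMap 0 r))
      refine Continuous.mul (Continuous.mul ?_ ?_) ?_
      · rw [show deriv (circleMap 0 r) = fun θ => circleMap 0 r θ * Complex.I from
          funext fun θ => deriv_circleMap 0 r θ]
        fun_prop
      · exact continuous_const.div (by fun_prop) fun θ => pow_ne_zero _ (hz0 θ)
      · have := hgd.continuousOn.comp_continuous (continuous_circleMap 0 r)
          (fun θ => circleMap_mem_closedBall 0 hr.le θ)
        simpa only [Function.comp_def, hg, spL_apply] using this
    have hI : (∫ θ in (0 : ℝ)..2 * Real.pi, (deriv (circleMap 0 r) θ *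
        (1 / circleMap 0 r θ ^ n) * f (circleMap 0 r θ, spL m (circleMap 0 r θ) a)) •
        spL m (circleMap 0 r θ)) (Pi.single i 1) =
        ∮ z in C(0, r), (1 / (z - 0) ^ (n - 1 - (i : ℕ) + 1)) • g z a := by
      rw [ContinuousLinearMap.intervalIntegral_apply hint, circleIntegral]
      refine intervalIntegral.integral_congr fun θ _ => ?_
      have hz := hz0 θ
      simp only [smul_apply, spL_single, smul_eq_mul, sub_zero, hg]
      rw [← spL_apply]
      have hp : circleMap 0 r θ ^ n =
          circleMap 0 r θ ^ (n - 1 - (i : ℕ) + 1) * circleMap 0 r θ ^ (i : ℕ) := by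
        rw [← pow_add, ← hni]
      rw [hp]
      field_simp
    rw [hI, hC, hk]
    have hpi : (Real.pi : ℂ) ≠ 0 := by exact_mod_cast Real.pi_ne_zero
    have hI0 := Complex.I_ne_zero
    simp only [smul_eq_mul]
    field_simp
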